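/- For every integer m ≥ 4, the identity f^cyc_m(X) = X·(1 + X·f_{m-2}(X)^2)·f_{m-3}(X)^4 holds in F_2[X]. -/

import Mathlib

open Polynomial

/-- `fibSet m` is the set of fibbinary integers below `2^m`: integers in `{0,…,2^m-1}`
whose binary representation has no two consecutive ones. -/
noncomputable def fibSet (m : ℕ) : Finset ℕ :=
  @Finset.filter _ (fun i => ∀ j : ℕ, ¬(i.testBit j ∧ i.testBit (j + 1)))
    (Classical.decPred _) (Finset.range (2 ^ m))

/-- `fibCycSet m` is the set of integers in `{1,…,2^m-2}` whose `m`-bit binary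
representation has no two cyclically consecutive ones. -/
def fibCycSet (m : ℕ) : Finset ℕ :=
  (Finset.Icc 1 (2 ^ m - 2)).filter
    (fun i => ∀ j < m, ¬(i.testBit j ∧ i.testBit ((j + 1) % m)))

/-- The `m`-th fibbinary polynomial over `F_2`. -/
noncomputable def fibPoly (m : ℕ) : Polynomial (ZMod 2) :=
  ∑ i ∈ fibSet m, X ^ i

/-- The `m`-th cyclic fibbinary polynomial over `F_2`. -/
noncomputable def fibCycPoly (m : ℕ) : Polynomial (ZMod 2) :=
  ∑ i ∈ fibCycSet m, X ^ i

def FibP (i : ℕ) : Prop := ∀ j : ℕ, ¬(i.testBit j ∧ i.testBit (j + 1))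

theorem mem_fibSet (m i : ℕ) : i ∈ fibSet m ↔ i < 2 ^ m ∧ FibP i := by
  simp [fibSet, FibP]

theorem fibP_double (k : ℕ) : FibP (2 * k) ↔ FibP k := by
  have e : ∀ j, (2 * k).testBit (j + 1) = k.testBit j := by
    intro j
    rw [Nat.testBit_succ]
    congr 1
    omega
  constructor
  · intro h j
    have := h (j + 1)
    rwa [e, e] at this
  · intro h j
    cases j with
    | zero => simp
    | succ j => rw [e, e]; exact h j

theorem tb4 (k j : ℕ) : (4 * k + 1).testBit (j + 2) = k.testBit j := by
  rw [Nat.testBit_succ, Nat.testBit_succ]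
  congr 1
  omega

theorem tb4_one (k : ℕ) : (4 * k + 1).testBit 1 = false := by
  rw [Nat.testBit_succ, Nat.testBit_zero]
  simp
  omega

theorem fibP_four (k : ℕ) : FibP (4 * k + 1) ↔ FibP k := by
  constructor
  · intro h j
    have := h (j + 2)
    rwa [show j + 2 + 1 = (j + 1) + 2 by ring, tb4, tb4] at this
  · intro h j
    match j with
    | 0 => simp [tb4_one]
    | 1 => simp [tb4_one]
    | j + 2 => rw [show j + 2 + 1 = (j + 1) + 2 by ring, tb4, tb4]; exact h j

theorem fibP_three (k : ℕ) : ¬ FibP (4 * k + 3) := by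
  intro h
  apply h 0
  rw [Nat.testBit_succ, Nat.testBit_zero, Nat.testBit_zero]
  simp
  omega

theorem cases4 (i : ℕ) : (∃ k, i = 2 * k) ∨ (∃ k, i = 4 * k + 1) ∨ (∃ k, i = 4 * k + 3) := by
  have : i % 4 = 0 ∨ i % 4 = 1 ∨ i % 4 = 2 ∨ i % 4 = 3 := by omega
  rcases this with h | h | h | h
  · exact Or.inl ⟨i / 2, by omega⟩
  · exact Or.inr (Or.inl ⟨i / 4, by omega⟩)
  · exact Or.inl ⟨i / 2, by omega⟩
  · exact Or.inr (Or.inr ⟨i / 4, by omega⟩)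

theorem sum_split (S A B : Finset ℕ) (h2 : ∀ k, 2 * k ∈ S ↔ k ∈ A)
    (h1 : ∀ k, 4 * k + 1 ∈ S ↔ k ∈ B) (h3 : ∀ k, 4 * k + 3 ∉ S) :
    (∑ i ∈ S, X ^ i : (ZMod 2)[X]) = (∑ i ∈ A, X ^ i) ^ 2 + X * (∑ i ∈ B, X ^ i) ^ 4 := by
  have hS : S = A.image (fun k => 2 * k) ∪ B.image (fun k => 4 * k + 1) := by
    ext i
    simp only [Finset.mem_union, Finset.mem_image]
    constructor
    · intro hi
      rcases cases4 i with ⟨k, rfl⟩ | ⟨k, rfl⟩ | ⟨k, rfl⟩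
      · exact Or.inl ⟨k, (h2 k).1 hi, rfl⟩
      · exact Or.inr ⟨k, (h1 k).1 hi, rfl⟩
      · exact absurd hi (h3 k)
    · rintro (⟨k, hk, rfl⟩ | ⟨k, hk, rfl⟩)
      · exact (h2 k).2 hk
      · exact (h1 k).2 hk
  have hd : Disjoint (A.image (fun k => 2 * k)) (B.image (fun k => 4 * k + 1)) := by
    rw [Finset.disjoint_left]
    intro i hi hj
    simp only [Finset.mem_image] at hi hj
    obtain ⟨a, -, rfl⟩ := hi
    obtain ⟨b, -, hb⟩ := hj
    omega
  have sq : ∀ T : Finset ℕ, ((∑ i ∈ T, X ^ i : (ZMod 2)[X])) ^ 2 = ∑ i ∈ T, X ^ (2 * i) := by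
    intro T
    rw [sum_pow_char 2]
    exact Finset.sum_congr rfl fun i _ => by rw [← pow_mul, mul_comm]
  have sq4 : ∀ T : Finset ℕ, ((∑ i ∈ T, X ^ i : (ZMod 2)[X])) ^ 4 = ∑ i ∈ T, X ^ (4 * i) := by
    intro T
    rw [show 4 = 2 * 2 by norm_num, pow_mul, sq, sum_pow_char 2]
    exact Finset.sum_congr rfl fun i _ => by rw [← pow_mul]; congr 1; ring
  rw [hS, Finset.sum_union hd, Finset.sum_image (by intro a _ b _ h; simp at h; omega),
    Finset.sum_image (by intro a _ b _ h; simp at h; omega), sq, sq4, Finset.mul_sum]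
  congr 1
  exact Finset.sum_congr rfl fun i _ => by ring

theorem fibPoly_rec (m : ℕ) : fibPoly (m + 2) = fibPoly (m + 1) ^ 2 + X * fibPoly m ^ 4 := by
  apply sum_split
  · intro k
    rw [mem_fibSet, mem_fibSet, fibP_double, pow_succ 2 (m + 1)]
    exact and_congr_left fun _ => by omega
  · intro k
    rw [mem_fibSet, mem_fibSet, fibP_four, pow_succ 2 (m + 1), pow_succ 2 m]
    exact and_congr_left fun _ => by omega
  · intro k
    rw [mem_fibSet]
    exact fun h => fibP_three k h.2

theorem fibP_zero : FibP 0 := by intro j; simp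

theorem fibPoly_zero : fibPoly 0 = 1 := by
  have : fibSet 0 = {0} := by
    ext i
    rw [mem_fibSet, Finset.mem_singleton]
    constructor
    · intro h; simpa using h.1
    · rintro rfl; exact ⟨by norm_num, fibP_zero⟩
  simp [fibPoly, this]

theorem fibPoly_one : fibPoly 1 = 1 + X := by
  have : fibSet 1 = {0, 1} := by
    ext i
    rw [mem_fibSet, Finset.mem_insert, Finset.mem_singleton]
    constructor
    · intro h; omega
    · rintro (rfl | rfl)
      · exact ⟨by norm_num, fibP_zero⟩
      · exact ⟨by norm_num, (fibP_four 0).2 fibP_zero⟩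
  simp [fibPoly, this]

theorem two_zero : (2 : (ZMod 2)[X]) = 0 := CharP.cast_eq_zero (ZMod 2)[X] 2

theorem fibPoly_prod (n : ℕ) : fibPoly (n + 2) = 1 + X * fibPoly (n + 1) * fibPoly n ^ 2 := by
  induction n with
  | zero =>
    rw [fibPoly_rec, fibPoly_zero, zero_add, fibPoly_one]
    linear_combination X * two_zero
  | succ n ih =>
    have r := fibPoly_rec n
    have r' := fibPoly_rec (n + 1)
    rw [show n + 1 + 2 = n + 3 by ring, show n + 1 + 1 = n + 2 by ring] at *
    generalize fibPoly (n + 3) = d at *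
    generalize fibPoly (n + 2) = b at *
    generalize fibPoly (n + 1) = a at *
    generalize fibPoly n = c at *
    have t := two_zero
    have hb : b ^ 2 = 1 + X ^ 2 * a ^ 2 * c ^ 4 := by
      rw [ih]; linear_combination X * a * c ^ 2 * t
    rw [r', hb]
    linear_combination -(X * a ^ 2) * r

theorem cyc_iff (n i : ℕ) (hi : i < 2 ^ (n + 3)) :
    (∀ j < n + 3, ¬(i.testBit j ∧ i.testBit ((j + 1) % (n + 3)))) ↔
      FibP i ∧ ¬ (i.testBit (n + 2) ∧ i.testBit 0) := by
  constructor
  · intro h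
    refine ⟨fun j => ?_, ?_⟩
    · by_cases hj : j + 1 < n + 3
      · have := h j (by omega)
        rwa [Nat.mod_eq_of_lt hj] at this
      · rintro ⟨-, h2⟩
        have : i.testBit (j + 1) = false := Nat.testBit_lt_two_pow
          (lt_of_lt_of_le hi (Nat.pow_le_pow_right (by norm_num) (by omega)))
        simp [this] at h2
    · have := h (n + 2) (by omega)
      rwa [show n + 2 + 1 = n + 3 by ring, Nat.mod_self] at this
  · rintro ⟨h, h'⟩ j hj
    by_cases hj' : j + 1 < n + 3
    · rw [Nat.mod_eq_of_lt hj']; exact h j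
    · obtain rfl : j = n + 2 := by omega
      rwa [show n + 2 + 1 = n + 3 by ring, Nat.mod_self]

theorem mem_cyc (n i : ℕ) : i ∈ insert 0 (fibCycSet (n + 3)) ↔
    i < 2 ^ (n + 3) ∧ FibP i ∧ ¬ (i.testBit (n + 2) ∧ i.testBit 0) := by
  have hp : 8 ≤ 2 ^ (n + 3) := by
    have := Nat.pow_le_pow_right (n := 2) (by norm_num) (show 3 ≤ n + 3 by omega)
    simpa using this
  rw [Finset.mem_insert, fibCycSet, Finset.mem_filter, Finset.mem_Icc]
  constructor
  · rintro (rfl | ⟨h, h'⟩)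
    · exact ⟨by omega, fibP_zero, by simp⟩
    · have hi : i < 2 ^ (n + 3) := by omega
      exact ⟨hi, (cyc_iff n i hi).1 h'⟩
  · rintro ⟨hi, h⟩
    by_cases h0 : i = 0
    · exact Or.inl h0
    · refine Or.inr ⟨⟨by omega, ?_⟩, (cyc_iff n i hi).2 h⟩
      by_contra hc
      have e : i = 4 * (2 ^ (n + 1) - 1) + 3 := by
        have : 2 ^ (n + 3) = 4 * 2 ^ (n + 1) := by ring
        omega
      exact fibP_three _ (e ▸ h.1)

theorem cyc_poly (n : ℕ) :
    1 + fibCycPoly (n + 3) = fibPoly (n + 2) ^ 2 + X * fibPoly n ^ 4 := by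
  have h0 : 0 ∉ fibCycSet (n + 3) := by simp [fibCycSet]
  have : 1 + fibCycPoly (n + 3) = ∑ i ∈ insert 0 (fibCycSet (n + 3)), X ^ i := by
    rw [Finset.sum_insert h0, pow_zero, fibCycPoly]
  rw [this]
  apply sum_split
  · intro k
    rw [mem_cyc, mem_fibSet, fibP_double, pow_succ 2 (n + 2)]
    have : (2 * k).testBit 0 = false := by simp
    rw [this]
    constructor
    · rintro ⟨h, h', -⟩; exact ⟨by omega, h'⟩
    · rintro ⟨h, h'⟩; exact ⟨by omega, h', by simp⟩
  · intro k
    rw [mem_cyc, mem_fibSet, fibP_four, tb4]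
    have e : (4 * k + 1).testBit 0 = true := by simp; omega
    rw [e]
    have hp : 2 ^ (n + 3) = 8 * 2 ^ n := by ring
    constructor
    · rintro ⟨h, h', h2⟩
      refine ⟨?_, h'⟩
      by_contra hc
      apply h2
      refine ⟨?_, rfl⟩
      rw [Nat.testBit_eq_decide_div_mod_eq]
      have : k / 2 ^ n = 1 := by
        apply Nat.div_eq_of_lt_le <;> omega
      simp [this]
    · rintro ⟨h, h'⟩
      refine ⟨by omega, h', ?_⟩
      simp [Nat.testBit_lt_two_pow h]
  · intro k
    rw [mem_cyc]
    exact fun h => fibP_three k h.2.1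

theorem fibCycPoly_factor (m : ℕ) (hm : 4 ≤ m) :
    fibCycPoly m = X * (1 + X * (fibPoly (m - 2)) ^ 2) * (fibPoly (m - 3)) ^ 4 := by
  obtain ⟨n, rfl⟩ : ∃ n, m = n + 3 := ⟨m - 3, by omega⟩
  rw [show n + 3 - 2 = n + 1 by omega, show n + 3 - 3 = n by omega]
  have h := cyc_poly n
  rw [fibPoly_prod] at h
  linear_combination h + X * fibPoly (n + 1) * fibPoly n ^ 2 * two_zero
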